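/- arXiv:1904.02914 — 7 statements merged into one kernel-verified Lean document; each statement's English description precedes it below -/
import Mathlib

section
/- Suppose Q ∈ ℝ^{A×A} satisfies the column constant value property: there exists c ∈ ℝ^A such that Q_{fe} = c_e for every arc e and every arc f with f⁻ = e⁺ (i.e. every f of which e is a successor), and Q_{fe} = 0 whenever e is not a successor of f. Then Q is linearizable with linearization vector p = c, i.e. x^T Q x = c^T x for every x ∈ X. -/
open Finset

/-- A cycle cover of the directed graph with arc set `A`, node set `N`,
starting-node map `src` and ending-node map `tgt`: a 0/1 vector such that
exactly one arc leaves and exactly one arc enters every node. -/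
def IsCycleCover {N A : Type*} [Fintype A] [DecidableEq N]
    (src tgt : A → N) (x : A → ℝ) : Prop :=
  (∀ e, x e = 0 ∨ x e = 1) ∧
  (∀ i : N, ∑ e ∈ univ.filter (fun e => src e = i), x e = 1) ∧
  (∀ i : N, ∑ e ∈ univ.filter (fun e => tgt e = i), x e = 1)

/-- The quadratic form `xᵀ Q x`. -/
def quadForm {A : Type*} [Fintype A] (Q : A → A → ℝ) (x : A → ℝ) : ℝ :=
  ∑ e, ∑ f, Q e f * x e * x f

theorem stmt_2 {N A : Type*} [Fintype N] [Fintype A] [DecidableEq N]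
    (src tgt : A → N) (Q : A → A → ℝ) (c : A → ℝ)
    (hcol : ∀ e f, tgt f = src e → Q f e = c e)
    (hzero : ∀ e f, tgt f ≠ src e → Q f e = 0) :
    ∀ x, IsCycleCover src tgt x → quadForm Q x = ∑ e, c e * x e := by
  rintro x ⟨-, -, hin⟩
  unfold quadForm
  rw [Finset.sum_comm]
  refine Finset.sum_congr rfl fun e _ => ?_
  -- Column `e` only sees the arcs entering `src e`, whose total weight is `1`.
  calc ∑ f, Q f e * x f * x e
      = ∑ f, c e * x e * (if tgt f = src e then x f else 0) := by
        refine Finset.sum_congr rfl fun f _ => ?_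
        split_ifs with h
        · rw [hcol e f h]; ring
        · rw [hzero e f h]; ring
    _ = c e * x e := by
        rw [← Finset.mul_sum, ← Finset.sum_filter, hin, mul_one]
end

section
/- Let Q ∈ ℝ^{A×A} be an incident weak sum matrix with supporting vectors b, c ∈ ℝ^A, i.e. Q_{ef} = b_e + c_f for every arc e and every successor f of e, and Q_{ef} = 0 whenever f is not a successor of e. Then Q is linearizable with linearization vector p = b + c, i.e. x^T Q x = (b + c)^T x for every x ∈ X. -/
/-! A cycle cover `x` selects exactly one arc leaving and one arc entering each node. In `xᵀ Q x`
only pairs `(e, f)` with `src f = tgt e` matter. For fixed `e`, the values `x f` over the successors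
`f` of `e` add up to `1`, so the terms `b e * x e * x f` contribute `b e * x e`; for fixed `f`, the
values `x e` over the predecessors `e` of `f` add up to `1`, so the terms `c f * x e * x f`
contribute `c f * x f`. -/

open Finset

theorem stmt_3 {N A : Type*} [Fintype N] [Fintype A] [DecidableEq N]
    (src tgt : A → N) (Q : A → A → ℝ) (b c : A → ℝ)
    (hsum : ∀ e f, src f = tgt e → Q e f = b e + c f)
    (hzero : ∀ e f, src f ≠ tgt e → Q e f = 0) :
    ∀ x, IsCycleCover src tgt x → quadForm Q x = ∑ e, (b e + c e) * x e := by
  rintro x ⟨-, hout, hin⟩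
  have hsplit : ∀ e f, Q e f * x e * x f =
      b e * x e * (if src f = tgt e then x f else 0) +
        c f * x f * (if tgt e = src f then x e else 0) := by
    intro e f
    by_cases h : src f = tgt e
    · rw [hsum e f h, if_pos h, if_pos h.symm]
      ring
    · rw [hzero e f h, if_neg h, if_neg (Ne.symm h)]
      ring
  have hb : ∑ e, ∑ f, b e * x e * (if src f = tgt e then x f else 0) = ∑ e, b e * x e := by
    refine sum_congr rfl fun e _ => ?_
    rw [← mul_sum, ← sum_filter, hout, mul_one]
  have hc : ∑ e, ∑ f, c f * x f * (if tgt e = src f then x e else 0) = ∑ f, c f * x f := by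
    rw [sum_comm]
    refine sum_congr rfl fun f _ => ?_
    rw [← mul_sum, ← sum_filter, hin, mul_one]
  simp only [quadForm, hsplit, sum_add_distrib, hb, hc, add_mul]
end

section
/- Let Q ∈ ℝ^{A×A} be a generalized weak sum matrix with supporting matrices B, C ∈ ℝ^{A×N} and D, T ∈ ℝ^{N×A}, i.e. Q_{ef} = B_{e,f⁺} + C_{e,f⁻} + D_{e⁺,f} + T_{e⁻,f} for all arcs e, f ∈ A. Then Q is linearizable with linearization vector p given by p_e = Σ_{k∈N} B_{e,k} + Σ_{k∈N} C_{e,k} + Σ_{k∈N} D_{k,e} + Σ_{k∈N} T_{k,e} for every e ∈ A, i.e. x^T Q x = p^T x for every x ∈ X. -/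
/-! The quadratic form splits into four double sums, one for each supporting matrix. For a fixed
arc `e`, the chosen arcs `f` start at every node exactly once, so `∑ f, B e (src f) * x f` is the
full row sum `∑ k, B e k` (`sum_potential_mul`); likewise for `C` with ending nodes, and for `D`
and `T` after exchanging the order of summation. -/

open Finset

/-- Summing a node potential over the endpoints of the arcs chosen by `x` gives its sum over all
nodes, if the arcs that `s` sends to any given node have total weight one. -/
lemma sum_potential_mul {N A : Type*} [Fintype N] [Fintype A] [DecidableEq N]
    (s : A → N) (x : A → ℝ)
    (h : ∀ i : N, ∑ e ∈ univ.filter (fun e => s e = i), x e = 1) (g : N → ℝ) :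
    ∑ f, g (s f) * x f = ∑ k, g k := by
  rw [← Finset.sum_fiberwise univ s]
  refine Finset.sum_congr rfl fun k _ => ?_
  calc ∑ f ∈ univ.filter (fun f => s f = k), g (s f) * x f
      = ∑ f ∈ univ.filter (fun f => s f = k), g k * x f :=
        Finset.sum_congr rfl fun f hf => by rw [(Finset.mem_filter.mp hf).2]
    _ = g k := by rw [← Finset.mul_sum, h k, mul_one]

theorem stmt_5 {N A : Type*} [Fintype N] [Fintype A] [DecidableEq N]
    (src tgt : A → N) (Q : A → A → ℝ)
    (B C : A → N → ℝ) (D T : N → A → ℝ)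
    (hQ : ∀ e f, Q e f = B e (src f) + C e (tgt f) + D (src e) f + T (tgt e) f) :
    ∀ x, IsCycleCover src tgt x →
      quadForm Q x =
        ∑ e, ((∑ k, B e k) + (∑ k, C e k) + (∑ k, D k e) + (∑ k, T k e)) * x e := by
  rintro x ⟨-, hs, ht⟩
  have row : ∀ (s : A → N), (∀ i : N, ∑ e ∈ univ.filter (fun e => s e = i), x e = 1) →
      ∀ P : A → N → ℝ, ∑ e, ∑ f, P e (s f) * x e * x f = ∑ e, (∑ k, P e k) * x e := by
    intro s h P
    refine Finset.sum_congr rfl fun e _ => ?_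
    rw [← sum_potential_mul s x h (P e), Finset.sum_mul]
    exact Finset.sum_congr rfl fun f _ => by ring
  -- The `D` and `T` terms are the `B` and `C` terms with the two arcs exchanged.
  have col : ∀ (s : A → N), (∀ i : N, ∑ e ∈ univ.filter (fun e => s e = i), x e = 1) →
      ∀ P : N → A → ℝ, ∑ e, ∑ f, P (s e) f * x e * x f = ∑ e, (∑ k, P k e) * x e := by
    intro s h P
    rw [Finset.sum_comm, ← row s h fun e k => P k e]
    exact Finset.sum_congr rfl fun e _ => Finset.sum_congr rfl fun f _ => by ring
  simp only [quadForm, hQ, add_mul, Finset.sum_add_distrib]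
  rw [row src hs B, row tgt ht C, col src hs D, col tgt ht T]
end

section
/- Let Q ∈ ℝ^{A×A} be a restricted generalized weak sum matrix with supporting matrices C ∈ ℝ^{A×N}, D ∈ ℝ^{N×A} and supporting vectors b, t ∈ ℝ^A, i.e. Q_{ef} = b_e + C_{e,f⁻} + D_{e⁺,f} + t_f whenever f is a successor of e, and Q_{ef} = C_{e,f⁻} + D_{e⁺,f} whenever f is not a successor of e. Then Q is linearizable with linearization vector p given by p_e = b_e + Σ_{k∈N} C_{e,k} + Σ_{k∈N} D_{k,e} + t_e for every e ∈ A, i.e. x^T Q x = p^T x for every x ∈ X. -/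
/-!
A cycle cover puts total weight one on the fibre of `src` (and of `tgt`) over every node, so
`∑ e, g (src e) * x e = ∑ k, g k` for every function `g` on the nodes (`sum_comp_mul_eq_sum`).
With indicator functions for the successor relation, `Q e f` is a sum of four terms. In each of
them one of `e`, `f` enters only through its starting or its ending node; summing over that arc
first, by the identity above, leaves a linear form in `x`.
-/

open Finset

/-- If `x` has total weight one on every fibre of `v`, then weighting a function of
`v e` by `x` and summing over `e` gives its plain sum over the nodes. -/
lemma sum_comp_mul_eq_sum {N A : Type*} [Fintype N] [Fintype A] [DecidableEq N]
    (v : A → N) (x : A → ℝ) (h : ∀ i : N, ∑ e ∈ univ.filter (fun e => v e = i), x e = 1)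
    (g : N → ℝ) : ∑ e, g (v e) * x e = ∑ k, g k := by
  rw [← Finset.sum_fiberwise univ v]
  refine Finset.sum_congr rfl fun k _ => ?_
  calc ∑ e ∈ univ.filter (fun e => v e = k), g (v e) * x e
      = ∑ e ∈ univ.filter (fun e => v e = k), g k * x e :=
        Finset.sum_congr rfl fun e he => by rw [(Finset.mem_filter.mp he).2]
    _ = g k := by rw [← Finset.mul_sum, h, mul_one]

theorem stmt_6 {N A : Type*} [Fintype N] [Fintype A] [DecidableEq N]
    (src tgt : A → N) (Q : A → A → ℝ)
    (C : A → N → ℝ) (D : N → A → ℝ) (b t : A → ℝ)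
    (hsucc : ∀ e f, src f = tgt e → Q e f = b e + C e (tgt f) + D (src e) f + t f)
    (hnsucc : ∀ e f, src f ≠ tgt e → Q e f = C e (tgt f) + D (src e) f) :
    ∀ x, IsCycleCover src tgt x →
      quadForm Q x =
        ∑ e, (b e + (∑ k, C e k) + (∑ k, D k e) + t e) * x e := by
  rintro x ⟨-, hs, ht⟩
  have hQ : ∀ e f, Q e f * x e * x f =
      (C e (tgt f) * x f) * x e + (D (src e) f * x e) * x f
        + ((if tgt e = src f then b e else 0) * x f) * x e
        + ((if tgt e = src f then t f else 0) * x e) * x f := by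
    intro e f
    by_cases h : src f = tgt e
    · rw [hsucc e f h, if_pos h.symm, if_pos h.symm]; ring
    · rw [hnsucc e f h, if_neg (Ne.symm h), if_neg (Ne.symm h)]; ring
  have hC : ∑ e, ∑ f, (C e (tgt f) * x f) * x e = ∑ e, (∑ k, C e k) * x e :=
    Finset.sum_congr rfl fun e _ => by
      rw [← Finset.sum_mul, sum_comp_mul_eq_sum tgt x ht (C e)]
  have hD : ∑ e, ∑ f, (D (src e) f * x e) * x f = ∑ f, (∑ k, D k f) * x f := by
    rw [Finset.sum_comm]
    exact Finset.sum_congr rfl fun f _ => by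
      rw [← Finset.sum_mul, sum_comp_mul_eq_sum src x hs (fun k => D k f)]
  have hb : ∑ e, ∑ f, ((if tgt e = src f then b e else 0) * x f) * x e = ∑ e, b e * x e :=
    Finset.sum_congr rfl fun e _ => by
      rw [← Finset.sum_mul,
        sum_comp_mul_eq_sum src x hs (fun k => if tgt e = k then b e else 0)]
      simp
  have htt : ∑ e, ∑ f, ((if tgt e = src f then t f else 0) * x e) * x f = ∑ f, t f * x f := by
    rw [Finset.sum_comm]
    exact Finset.sum_congr rfl fun f _ => by
      rw [← Finset.sum_mul,
        sum_comp_mul_eq_sum tgt x ht (fun k => if k = src f then t f else 0)]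
      simp
  simp only [quadForm, hQ, Finset.sum_add_distrib, hC, hD, hb, htt, add_mul]
  ring
end

section
/- For every Q ∈ ℝ^{A×A} it holds that τ2(Q) ⊆ τ3(Q). -/
open Finset

/-- The set `τ1(Q)` of linearization vectors coming from incident weak sum
matrices dominated by `Q`. -/
def tau1 {N A : Type*} [Fintype A] (src tgt : A → N) (Q : A → A → ℝ) :
    Set (A → ℝ) :=
  {p | ∃ b c : A → ℝ,
    (∀ e f, src f = tgt e → b e + c f ≤ Q e f) ∧
    ∀ e, p e = b e + c e}

/-- The set `τ2(Q)` of linearization vectors coming from restricted generalized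
weak sum matrices dominated by `Q`. -/
def tau2 {N A : Type*} [Fintype N] [Fintype A] (src tgt : A → N)
    (Q : A → A → ℝ) : Set (A → ℝ) :=
  {p | ∃ (b t : A → ℝ) (C : A → N → ℝ) (D : N → A → ℝ),
    (∀ e f, src f = tgt e → b e + C e (tgt f) + D (src e) f + t f ≤ Q e f) ∧
    (∀ e f, src f ≠ tgt e → C e (tgt f) + D (src e) f ≤ Q e f) ∧
    ∀ e, p e = b e + (∑ k, C e k) + (∑ k, D k e) + t e}

/-- The set `τ3(Q)` of linearization vectors coming from generalized weak sum
matrices dominated by `Q`. -/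
def tau3 {N A : Type*} [Fintype N] [Fintype A] (src tgt : A → N)
    (Q : A → A → ℝ) : Set (A → ℝ) :=
  {p | ∃ (B C : A → N → ℝ) (D T : N → A → ℝ),
    (∀ e f, B e (src f) + C e (tgt f) + D (src e) f + T (tgt e) f ≤ Q e f) ∧
    ∀ e, p e = (∑ k, B e k) + (∑ k, C e k) + (∑ k, D k e) + (∑ k, T k e)}

theorem stmt_10 {N A : Type*} [Fintype N] [Fintype A] [DecidableEq N]
    (src tgt : A → N) (Q : A → A → ℝ) :
    tau2 src tgt Q ⊆ tau3 src tgt Q := by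
  rintro p ⟨b, t, C, D, hsucc, hnot, hp⟩
  -- Put all of `b e` at the node `tgt e` and all of `t f` at the node `src f`: these terms
  -- then enter the constraint for `(e, f)` exactly when `f` is a successor of `e`.
  refine ⟨fun e k => if k = tgt e then b e else 0, C, D,
    fun k f => if k = src f then t f else 0, fun e f => ?_, fun e => ?_⟩
  · by_cases h : src f = tgt e
    · simpa [h] using hsucc e f h
    · simpa [h, Ne.symm h] using hnot e f h
  · simp [hp e]
end

section
/- Suppose there exist B, C ∈ ℝ^{A×N} and t ∈ ℝ^A such that Q_{ef} = B_{e,f⁺} + C_{e,f⁻} for all arcs e ≠ f and Q_{ee} = B_{e,e⁺} + C_{e,e⁻} + t_e for all arcs e. Then Q is linearizable with linearization vector p given by p_e = t_e + Σ_{i∈N} B_{e,i} + Σ_{i∈N} C_{e,i} for every e ∈ A, i.e. x^T Q x = p^T x for every x ∈ X. -/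
/-! Since exactly one selected arc leaves (enters) each node, summing `g (src f) * x f`
(or `g (tgt f) * x f`) over all arcs `f` gives `∑ i, g i`. Applied to the rows of `B` and `C`,
this makes row `e` of the quadratic form equal to `x e * (∑ i, B e i + ∑ i, C e i)`, plus the
diagonal contribution `t e * x e * x e`, which equals `t e * x e` as `x e` is `0` or `1`. -/

open Finset

theorem sum_comp_mul_of_fiber_sum_eq_one {N A : Type*} [Fintype N] [Fintype A] [DecidableEq N]
    (s : A → N) (x : A → ℝ) (h : ∀ i : N, ∑ e ∈ univ.filter (fun e => s e = i), x e = 1)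
    (g : N → ℝ) : ∑ f, g (s f) * x f = ∑ i, g i := by
  rw [← Finset.sum_fiberwise univ s]
  refine Finset.sum_congr rfl fun i _ => ?_
  rw [← mul_one (g i), ← h i, Finset.mul_sum]
  refine Finset.sum_congr rfl fun f hf => ?_
  rw [(Finset.mem_filter.mp hf).2]

theorem stmt_12 {N A : Type*} [Fintype N] [Fintype A] [DecidableEq N] [DecidableEq A]
    (src tgt : A → N) (Q : A → A → ℝ)
    (B C : A → N → ℝ) (t : A → ℝ)
    (hoff : ∀ e f, e ≠ f → Q e f = B e (src f) + C e (tgt f))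
    (hdiag : ∀ e, Q e e = B e (src e) + C e (tgt e) + t e) :
    ∀ x, IsCycleCover src tgt x →
      quadForm Q x = ∑ e, (t e + (∑ i, B e i) + (∑ i, C e i)) * x e := by
  rintro x ⟨h01, hsrc, htgt⟩
  refine Finset.sum_congr rfl fun e _ => ?_
  have hQ : ∀ f, Q e f * x e * x f =
      x e * (B e (src f) * x f) + x e * (C e (tgt f) * x f) +
        (if e = f then t e * x e * x f else 0) := by
    intro f
    by_cases hef : e = f
    · subst hef
      rw [hdiag, if_pos rfl]
      ring
    · rw [hoff e f hef, if_neg hef]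
      ring
  have hsq : x e * x e = x e := by
    rcases h01 e with h | h <;> simp [h]
  simp only [hQ, Finset.sum_add_distrib, ← Finset.mul_sum, Finset.sum_ite_eq,
    Finset.mem_univ, if_true]
  rw [sum_comp_mul_of_fiber_sum_eq_one src x hsrc (B e),
    sum_comp_mul_of_fiber_sum_eq_one tgt x htgt (C e)]
  linear_combination t e * hsq
end

section
/- Assume X is nonempty and for every arc e there exists a cycle cover x ∈ X with x_e = 1. Let v_CGL be the infimum of Σ_{e,f∈A} Q_{ef} y_{ef} over all pairs (x, y) with x ∈ P and y ∈ ℝ^{A×A} satisfying: y_{ef} ≥ 0 for all e, f; for every node i ∈ N and every arc e ∈ A, Σ_{f : f⁺ = i} y_{ef} = x_e and Σ_{f : f⁻ = i} y_{ef} = x_e; and y_{ee} = x_e for every arc e. Then v_CGL = v_GL, i.e. the optimal value of the continuous relaxation of the Gilmore–Lawler integer linear program equals the Gilmore–Lawler bound. -/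
/-!
The continuous relaxation decouples over the rows of `y`. If `(x, y)` is feasible and `x e > 0`,
then the row `y e` divided by `x e` is a point of the polytope `P` with value `1` at `e`, so row `e`
costs at least `z_e * x e`; if `x e = 0` the whole row vanishes. Hence
`glz_mul_le_row` gives `v_GL ≤ v_CGL`, and in particular the relaxation is bounded below.
Conversely, given `x ∈ P` and points `w e ∈ P` with `w e e = 1` that are `δ`-optimal for `z_e`, the
product `y e f = x e * w e f` is feasible and costs at most `∑ z_e x_e + δ |A|`; letting `δ → 0`
gives `v_CGL ≤ v_GL`. Working with `δ`-optimal points avoids proving that the infima are attained,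
and linear functionals are bounded on `P` because `P` lies in the unit cube.
-/

open Finset

/-- Membership in the fractional cycle cover polytope `P`. -/
def InPoly {N A : Type*} [Fintype A] [DecidableEq N]
    (src tgt : A → N) (x : A → ℝ) : Prop :=
  (∀ e, 0 ≤ x e) ∧
  (∀ i : N, ∑ e ∈ univ.filter (fun e => src e = i), x e = 1) ∧
  (∀ i : N, ∑ e ∈ univ.filter (fun e => tgt e = i), x e = 1)

/-- `z_e`: the minimum interaction cost of arc `e` with a fractional cycle
cover containing `e`. -/
noncomputable def glz {N A : Type*} [Fintype A] [DecidableEq N]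
    (src tgt : A → N) (Q : A → A → ℝ) (e : A) : ℝ :=
  sInf {w : ℝ | ∃ x, InPoly src tgt x ∧ x e = 1 ∧ w = ∑ f, Q e f * x f}

/-- The Gilmore–Lawler bound `v_GL`. -/
noncomputable def vGL {N A : Type*} [Fintype A] [DecidableEq N]
    (src tgt : A → N) (Q : A → A → ℝ) : ℝ :=
  sInf {v : ℝ | ∃ x, InPoly src tgt x ∧ v = ∑ e, glz src tgt Q e * x e}

section GilmoreLawler

variable {N A : Type*} [Fintype A] [DecidableEq N] {src tgt : A → N}

lemma IsCycleCover.inPoly {x : A → ℝ} (h : IsCycleCover src tgt x) : InPoly src tgt x :=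
  ⟨fun e => by rcases h.1 e with h | h <;> simp [h], h.2⟩

lemma InPoly.le_one {x : A → ℝ} (h : InPoly src tgt x) (e : A) : x e ≤ 1 := by
  rw [← h.2.1 (src e)]
  exact single_le_sum (f := x) (fun f _ => h.1 f) (by simp)

lemma InPoly.neg_sum_abs_le {x : A → ℝ} (h : InPoly src tgt x) (c : A → ℝ) :
    -∑ f, |c f| ≤ ∑ f, c f * x f := by
  rw [← sum_neg_distrib]
  refine sum_le_sum fun f _ => ?_
  have h1 : |c f| * x f ≤ |c f| := mul_le_of_le_one_right (abs_nonneg _) (h.le_one f)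
  have h2 : -|c f| * x f ≤ c f * x f := mul_le_mul_of_nonneg_right (neg_abs_le _) (h.1 f)
  linarith

lemma glz_le (Q : A → A → ℝ) {e : A} {x : A → ℝ} (h : InPoly src tgt x) (he : x e = 1) :
    glz src tgt Q e ≤ ∑ f, Q e f * x f := by
  refine csInf_le ⟨-∑ f, |Q e f|, ?_⟩ ⟨x, h, he, rfl⟩
  rintro _ ⟨w, hw, -, rfl⟩
  exact hw.neg_sum_abs_le _

lemma vGL_le (Q : A → A → ℝ) {x : A → ℝ} (h : InPoly src tgt x) :
    vGL src tgt Q ≤ ∑ e, glz src tgt Q e * x e := by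
  refine csInf_le ⟨-∑ e, |glz src tgt Q e|, ?_⟩ ⟨x, h, rfl⟩
  rintro _ ⟨w, hw, rfl⟩
  exact hw.neg_sum_abs_le _

/-- A nonnegative row `u` lying in the dilate `t • P` with `u e = t` costs at least `t * z_e`. -/
lemma glz_mul_le_row (Q : A → A → ℝ) {e : A} {t : ℝ} (ht : 0 ≤ t) {u : A → ℝ}
    (hu : ∀ f, 0 ≤ u f)
    (hs : ∀ i : N, ∑ f ∈ univ.filter (fun f => src f = i), u f = t)
    (hr : ∀ i : N, ∑ f ∈ univ.filter (fun f => tgt f = i), u f = t)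
    (he : u e = t) : glz src tgt Q e * t ≤ ∑ f, Q e f * u f := by
  rcases ht.eq_or_lt with rfl | ht
  · have h0 : ∀ f, u f = 0 := fun f =>
      (sum_eq_zero_iff_of_nonneg fun g _ => hu g).1 (hs (src f)) f (by simp)
    simp [h0]
  · have hP : InPoly src tgt (fun f => u f / t) :=
      ⟨fun f => div_nonneg (hu f) ht.le,
        fun i => by rw [← sum_div, hs, div_self ht.ne'],
        fun i => by rw [← sum_div, hr, div_self ht.ne']⟩
    have h := glz_le Q (e := e) hP (by simp only [he, div_self ht.ne'])
    rw [← le_div_iff₀ ht]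
    simpa only [sum_div, mul_div_assoc] using h

end GilmoreLawler

theorem stmt_13 {N A : Type*} [Fintype N] [Fintype A] [DecidableEq N] [DecidableEq A]
    (src tgt : A → N) (Q : A → A → ℝ)
    (hX : ∃ x, IsCycleCover src tgt x)
    (hcov : ∀ e, ∃ x, IsCycleCover src tgt x ∧ x e = 1) :
    sInf {v : ℝ | ∃ (x : A → ℝ) (y : A → A → ℝ), InPoly src tgt x ∧
        (∀ e f, 0 ≤ y e f) ∧
        (∀ (i : N) (e : A), ∑ f ∈ univ.filter (fun f => src f = i), y e f = x e) ∧
        (∀ (i : N) (e : A), ∑ f ∈ univ.filter (fun f => tgt f = i), y e f = x e) ∧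
        (∀ e, y e e = x e) ∧
        v = ∑ e, ∑ f, Q e f * y e f} =
      vGL src tgt Q := by
  have hlow : ∀ (x : A → ℝ) (y : A → A → ℝ), InPoly src tgt x →
      (∀ e f, 0 ≤ y e f) →
      (∀ (i : N) (e : A), ∑ f ∈ univ.filter (fun f => src f = i), y e f = x e) →
      (∀ (i : N) (e : A), ∑ f ∈ univ.filter (fun f => tgt f = i), y e f = x e) →
      (∀ e, y e e = x e) → vGL src tgt Q ≤ ∑ e, ∑ f, Q e f * y e f :=
    fun x y hx hy hs hr hd => (vGL_le Q hx).trans <| sum_le_sum fun e _ =>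
      glz_mul_le_row Q (hx.1 e) (hy e) (fun i => hs i e) (fun i => hr i e) (hd e)
  -- The product of `x` with a family of points of `P` is feasible for the relaxation.
  have hprod : ∀ (x : A → ℝ) (w : A → A → ℝ), InPoly src tgt x →
      (∀ e, InPoly src tgt (w e)) → (∀ e, w e e = 1) →
      (∀ e f, 0 ≤ x e * w e f) ∧
      (∀ (i : N) (e : A), ∑ f ∈ univ.filter (fun f => src f = i), x e * w e f = x e) ∧
      (∀ (i : N) (e : A), ∑ f ∈ univ.filter (fun f => tgt f = i), x e * w e f = x e) ∧
      (∀ e, x e * w e e = x e) := fun x w hx hw hd =>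
    ⟨fun e f => mul_nonneg (hx.1 e) ((hw e).1 f),
      fun i e => by rw [← mul_sum, (hw e).2.1, mul_one],
      fun i e => by rw [← mul_sum, (hw e).2.2, mul_one],
      fun e => by rw [hd, mul_one]⟩
  obtain ⟨x₀, hx₀⟩ := hX
  apply le_antisymm
  · refine le_csInf ⟨_, x₀, hx₀.inPoly, rfl⟩ ?_
    rintro _ ⟨x, hx, rfl⟩
    refine le_of_forall_pos_le_add fun ε hε => ?_
    have hc : (0 : ℝ) < Fintype.card A + 1 := by positivity
    -- The loss `δ` per arc is chosen so that the total loss `δ * |A|` is at most `ε`.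
    set δ : ℝ := ε / (Fintype.card A + 1) with hδ
    have hδ0 : 0 < δ := div_pos hε hc
    have hopt : ∀ e, ∃ w, InPoly src tgt w ∧ w e = 1 ∧
        ∑ f, Q e f * w f < glz src tgt Q e + δ := by
      intro e
      obtain ⟨c, hcc, hce⟩ := hcov e
      obtain ⟨_, ⟨w, hw, hwe, rfl⟩, hlt⟩ := Real.lt_sInf_add_pos
        (s := {v : ℝ | ∃ x, InPoly src tgt x ∧ x e = 1 ∧ v = ∑ f, Q e f * x f})
        ⟨_, c, hcc.inPoly, hce, rfl⟩ hδ0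
      exact ⟨w, hw, hwe, hlt⟩
    choose w hw hwe hlt using hopt
    obtain ⟨h1, h2, h3, h4⟩ := hprod x w hx hw hwe
    calc _ ≤ ∑ e, ∑ f, Q e f * (x e * w e f) := by
          refine csInf_le ⟨vGL src tgt Q, ?_⟩
            ⟨x, fun e f => x e * w e f, hx, h1, h2, h3, h4, rfl⟩
          rintro _ ⟨x, y, hx, hy, hs, hr, hd, rfl⟩
          exact hlow x y hx hy hs hr hd
      _ ≤ ∑ e, (glz src tgt Q e * x e + δ) := by
          refine sum_le_sum fun e _ => ?_
          have hrow : ∑ f, Q e f * (x e * w e f) = (∑ f, Q e f * w e f) * x e := by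
            rw [sum_mul]
            exact sum_congr rfl fun f _ => by ring
          rw [hrow]
          have hm := mul_le_mul_of_nonneg_right (hlt e).le (hx.1 e)
          have hδx : δ * x e ≤ δ := mul_le_of_le_one_right hδ0.le (hx.le_one e)
          linarith
      _ ≤ _ := by
          rw [sum_add_distrib, sum_const, card_univ, nsmul_eq_mul]
          have hε' : δ * (Fintype.card A + 1) = ε := div_mul_cancel₀ _ hc.ne'
          linarith
  · choose c hcc hce using hcov
    obtain ⟨h1, h2, h3, h4⟩ := hprod x₀ c hx₀.inPoly (fun e => (hcc e).inPoly) hce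
    refine le_csInf
      ⟨_, x₀, fun e f => x₀ e * c e f, hx₀.inPoly, h1, h2, h3, h4, rfl⟩ ?_
    rintro _ ⟨x, y, hx, hy, hs, hr, hd, rfl⟩
    exact hlow x y hx hy hs hr hd
end
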